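/- arXiv:1306.5116 — 2 statements merged into one kernel-verified Lean document; each statement's English description precedes it below -/
import Mathlib

section
/- Assume the standing assumptions and that NW is non-empty and finite. Then for β ∈ ℝ there exists a non-zero β-harmonic vector for A only when β = β₀, and there exists a non-zero β₀-harmonic vector which is unique up to multiplication by non-negative scalars. -/
open scoped ENNReal
open Filter

variable {V : Type*}

/-- The set of vertices of the graph of `A` that emit no edges or infinitely many edges. -/
def VInf (A : V → V → ℝ≥0∞) : Set V :=
  {v | {w | A v w ≠ 0} = ∅ ∨ {w | A v w ≠ 0}.Infinite}

/-- A set of vertices is hereditary if every edge with source in it has range in it. -/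
def Hereditary (A : V → V → ℝ≥0∞) (H : Set V) : Prop :=
  ∀ ⦃v w : V⦄, v ∈ H → A v w ≠ 0 → w ∈ H

/-- A set of vertices is saturated if it contains every finite emitter all of whose
out-neighbours lie in it. -/
def Saturated (A : V → V → ℝ≥0∞) (H : Set V) : Prop :=
  ∀ v : V, v ∉ VInf A → (∀ w, A v w ≠ 0 → w ∈ H) → v ∈ H

/-- `A` is cofinal if the only hereditary and saturated subsets are `∅` and `V`. -/
def Cofinal (A : V → V → ℝ≥0∞) : Prop :=
  ∀ H : Set V, Hereditary A H → Saturated A H → H = ∅ ∨ H = Set.univ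

/-- Matrix powers of `A`, with entries in `[0,∞]`. -/
noncomputable def Apow [DecidableEq V] (A : V → V → ℝ≥0∞) : ℕ → V → V → ℝ≥0∞
  | 0 => fun v w => if v = w then 1 else 0
  | n + 1 => fun v w => ∑' u, A v u * Apow A n u w

/-- `e^β` as an extended nonnegative real. -/
noncomputable def expb (β : ℝ) : ℝ≥0∞ := ENNReal.ofReal (Real.exp β)

/-- `e^{-nβ}` as an extended nonnegative real. -/
noncomputable def expn (β : ℝ) (n : ℕ) : ℝ≥0∞ := ENNReal.ofReal (Real.exp (-(n : ℝ) * β))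

/-- A vector `ξ : V → [0,∞)` is almost `β`-harmonic for `A` if
`∑_w A_{vw} ξ_w = e^β ξ_v` off `V_∞` and `∑_w A_{vw} ξ_w ≤ e^β ξ_v` on `V_∞`. -/
def IsAlmostHarmonic (A : V → V → ℝ≥0∞) (β : ℝ) (ξ : V → ℝ≥0∞) : Prop :=
  (∀ v, ξ v ≠ ⊤) ∧
  (∀ v, v ∉ VInf A → ∑' w, A v w * ξ w = expb β * ξ v) ∧
  (∀ v, v ∈ VInf A → ∑' w, A v w * ξ w ≤ expb β * ξ v)

/-- A vector `ξ : V → [0,∞)` is `β`-harmonic for `A` if `∑_w A_{vw} ξ_w = e^β ξ_v`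
for every vertex `v`. -/
def IsHarmonic (A : V → V → ℝ≥0∞) (β : ℝ) (ξ : V → ℝ≥0∞) : Prop :=
  (∀ v, ξ v ≠ ⊤) ∧ ∀ v, ∑' w, A v w * ξ w = expb β * ξ v

/-- The non-wandering vertices: those admitting a loop of positive length. -/
def NW (A : V → V → ℝ≥0∞) : Set V :=
  {v | Relation.TransGen (fun a b => A a b ≠ 0) v v}

/-- Standing assumptions i)–iii): `A` is cofinal, the graph has no sinks, the entries of
`A` are finite and all powers of `A` have finite entries. -/
def Standing [DecidableEq V] (A : V → V → ℝ≥0∞) : Prop :=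
  Cofinal A ∧ (∀ v, ∃ w, A v w ≠ 0) ∧ (∀ v w, A v w ≠ ⊤) ∧
    ∀ (n : ℕ) (v w : V), Apow A n v w ≠ ⊤

/-- A function `k` supported on `V_∞` is `β`-summable when
`∑_{u ∈ V_∞} ∑_n e^{-nβ} A^n_{uu} k_u < ∞`. -/
def BSummable [DecidableEq V] (A : V → V → ℝ≥0∞) (β : ℝ) (k : V → ℝ≥0∞) : Prop :=
  (∀ u, u ∉ VInf A → k u = 0) ∧ (∑' u, ∑' n, expn β n * Apow A n u u * k u) ≠ ⊤

/-- `k̂_v = ∑_{u ∈ V_∞} ∑_n e^{-nβ} A^n_{vu} k_u` (for `k` supported on `V_∞`). -/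
noncomputable def khat [DecidableEq V] (A : V → V → ℝ≥0∞) (β : ℝ) (k : V → ℝ≥0∞) (v : V) :
    ℝ≥0∞ :=
  ∑' u, ∑' n, expn β n * Apow A n v u * k u

/-- The first-return quantities `r_{vw}(n)`: `r_{vw}(0) = 0`, `r_{vw}(1) = A_{vw}` and
`r_{vw}(n+1) = ∑_{u ≠ w} A_{vu} r_{uw}(n)` for `n ≥ 1`. -/
noncomputable def fr [DecidableEq V] (A : V → V → ℝ≥0∞) (w : V) : ℕ → V → ℝ≥0∞
  | 0 => fun _ => 0
  | 1 => fun v => A v w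
  | n + 2 => fun v => ∑' u, if u = w then 0 else A v u * fr A w (n + 1) u

/-!
Cofinality makes the saturation of any non-empty hereditary set equal to `V`, so a property that
holds on such a set and passes from the out-neighbours of a finite emitter to the emitter itself
holds everywhere. Applied to `NW`, this shows that `NW` is hereditary and strongly connected, that
no vertex emits infinitely many edges, and that a harmonic vector is determined by its restriction
to `NW`.

Existence: the restriction of `A` to `NW` is a finite irreducible matrix, whose Perron–Frobenius
eigenvector is extended to `V` by solving the harmonicity equation off `NW`.

Uniqueness: where the ratio of two harmonic vectors is minimal over `NW`, it is minimal also at all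
out-neighbours, so the ratio is constant on a non-empty hereditary set and hence everywhere.

The exponent: a non-zero `β`-harmonic `ξ` vanishes nowhere, so `A^n_{vv} ≤ e^{nβ}`. Conversely,
`∑_w (∑_n e^{-nβ} A^n_{vw}) ξ_w = ∑_n ξ_v = ∞` for `v ∈ NW`, and the outer sum runs over the finite
set `NW`; so some, and by strong connectedness the diagonal, series `∑_n e^{-nβ} A^n_{vv}` diverges,
and the root test gives `limsup_n (A^n_{vv})^{1/n} ≥ e^β`.
-/

section PerronFrobenius

open Matrix

theorem exists_apply_pos_of_isIrreducible {ι R : Type*} [Finite ι] [Ring R] [LinearOrder R]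
    [IsStrictOrderedRing R] {B : Matrix ι ι R} (hB : B.IsIrreducible) (i : ι) :
    ∃ j, 0 < B i j := by
  classical
  have := Fintype.ofFinite ι
  by_contra! hle
  have hrow : ∀ j, B i j = 0 := fun j => le_antisymm (hle j) (hB.nonneg i j)
  obtain ⟨k, hk, hpos⟩ := (isIrreducible_iff_exists_pow_pos hB.nonneg).mp hB i i
  obtain ⟨n, rfl⟩ := Nat.exists_eq_add_one.mpr hk
  simp [pow_succ', mul_apply, hrow] at hpos

variable {ι : Type*} [Fintype ι]

theorem mulVec_pos_of_forall_pos {R : Type*} [Semiring R] [PartialOrder R] [IsStrictOrderedRing R]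
    {P : Matrix ι ι R} (hP : ∀ i j, 0 < P i j) {x : ι → R} (hx : 0 < x) (i : ι) :
    0 < (P *ᵥ x) i := by
  obtain ⟨hx0, j, hj⟩ := Pi.lt_def.mp hx
  exact Finset.sum_pos' (fun k _ => mul_nonneg (hP i k).le (hx0 k))
    ⟨j, Finset.mem_univ j, mul_pos (hP i j) hj⟩

section CollatzWielandt

variable [Nonempty ι] {B P : Matrix ι ι ℝ} {x : ι → ℝ}

/-- The Collatz–Wielandt function `x ↦ min_i (B x)_i / x_i`, whose maximum over positive vectors is
the Perron–Frobenius eigenvalue of `B`. It is meaningful only where no `x i` vanishes. -/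
noncomputable def collatzWielandt (B : Matrix ι ι ℝ) (x : ι → ℝ) : ℝ :=
  Finset.univ.inf' Finset.univ_nonempty fun i => (B *ᵥ x) i / x i

theorem collatzWielandt_smul (B : Matrix ι ι ℝ) (x : ι → ℝ) {c : ℝ} (hc : c ≠ 0) :
    collatzWielandt B (c • x) = collatzWielandt B x := by
  simp only [collatzWielandt, mulVec_smul, Pi.smul_apply, smul_eq_mul, mul_div_mul_left _ _ hc]

theorem continuousOn_collatzWielandt (B : Matrix ι ι ℝ) :
    ContinuousOn (collatzWielandt B) {x | ∀ i, x i ≠ 0} :=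
  ContinuousOn.finset_inf'_apply _ fun i _ =>
    ContinuousOn.div (by fun_prop) (by fun_prop) fun _ hx => hx i

theorem collatzWielandt_smul_le_mulVec (hx : ∀ i, 0 < x i) : collatzWielandt B x • x ≤ B *ᵥ x :=
  fun i => (le_div_iff₀ (hx i)).mp (Finset.inf'_le _ (Finset.mem_univ i))

theorem lt_collatzWielandt_of_forall_lt {c : ℝ} (hx : ∀ i, 0 < x i)
    (h : ∀ i, c * x i < (B *ᵥ x) i) : c < collatzWielandt B x :=
  (Finset.lt_inf'_iff _).mpr fun i _ => (lt_div_iff₀ (hx i)).mpr (h i)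

theorem collatzWielandt_lt_collatzWielandt_mulVec (hP : ∀ i j, 0 < P i j) (hPB : Commute P B)
    (hx : ∀ i, 0 < x i) (hne : B *ᵥ x ≠ collatzWielandt B x • x) :
    collatzWielandt B x < collatzWielandt B (P *ᵥ x) := by
  set c := collatzWielandt B x
  have hgap : 0 < B *ᵥ x - c • x :=
    sub_pos.mpr (lt_of_le_of_ne (collatzWielandt_smul_le_mulVec hx) hne.symm)
  have hx0 : 0 < x := Pi.lt_def.mpr ⟨fun i => (hx i).le, Classical.arbitrary ι, hx _⟩
  refine lt_collatzWielandt_of_forall_lt (mulVec_pos_of_forall_pos hP hx0) fun i => ?_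
  have hPgap := mulVec_pos_of_forall_pos hP hgap i
  rw [mulVec_sub, mulVec_mulVec, hPB.eq, ← mulVec_mulVec, mulVec_smul] at hPgap
  exact sub_pos.mp hPgap

theorem exists_pos_eigenvector_of_commute (hP : ∀ i j, 0 < P i j) (hPB : Commute P B) :
    ∃ (l : ℝ) (x : ι → ℝ), (∀ i, 0 < x i) ∧ B *ᵥ x = l • x := by
  classical
  -- The Collatz–Wielandt function need not be continuous on the boundary of the simplex, so it is
  -- maximized over the image of the simplex under `P`, which consists of positive vectors.
  have hpos : ∀ x ∈ stdSimplex ℝ ι, ∀ i, 0 < (P *ᵥ x) i := fun x hx =>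
    mulVec_pos_of_forall_pos hP (lt_of_le_of_ne hx.1 (by rintro rfl; simpa using hx.2))
  have hcont : ContinuousOn (fun x => collatzWielandt B (P *ᵥ x)) (stdSimplex ℝ ι) :=
    (continuousOn_collatzWielandt B).comp (by fun_prop) fun x hx i => (hpos x hx i).ne'
  obtain ⟨x, hx, hmax⟩ := (isCompact_stdSimplex ℝ ι).exists_isMaxOn
    ⟨_, single_mem_stdSimplex ℝ (Classical.arbitrary ι)⟩ hcont
  refine ⟨collatzWielandt B (P *ᵥ x), P *ᵥ x, hpos x hx, ?_⟩
  by_contra hne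
  set y := P *ᵥ x
  have hs : 0 < ∑ i, y i := Finset.sum_pos (fun i _ => hpos x hx i) Finset.univ_nonempty
  have hmem : (∑ i, y i)⁻¹ • y ∈ stdSimplex ℝ ι :=
    ⟨fun i => mul_nonneg (inv_pos.mpr hs).le (hpos x hx i).le, by
      simp only [Pi.smul_apply, smul_eq_mul, ← Finset.mul_sum, inv_mul_cancel₀ hs.ne']⟩
  have hle : collatzWielandt B (P *ᵥ y) ≤ collatzWielandt B y := by
    simpa only [mulVec_smul, collatzWielandt_smul B _ (inv_pos.mpr hs).ne'] using
      isMaxOn_iff.mp hmax _ hmem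
  exact hle.not_gt (collatzWielandt_lt_collatzWielandt_mulVec hP hPB (hpos x hx) hne)

end CollatzWielandt

theorem exists_pos_commute_of_isIrreducible {R : Type*} [Ring R] [LinearOrder R]
    [IsStrictOrderedRing R] {B : Matrix ι ι R} (hB : B.IsIrreducible) :
    ∃ P : Matrix ι ι R, (∀ i j, 0 < P i j) ∧ Commute P B := by
  classical
  choose k _ hk using (isIrreducible_iff_exists_pow_pos hB.nonneg).mp hB
  refine ⟨∑ p : ι × ι, B ^ k p.1 p.2, fun i j => ?_,
    Commute.sum_left _ _ _ fun p _ => (Commute.refl B).pow_left _⟩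
  rw [Matrix.sum_apply]
  exact Finset.sum_pos' (fun p _ => pow_apply_nonneg hB.nonneg _ i j)
    ⟨(i, j), Finset.mem_univ _, hk i j⟩

theorem exists_pos_eigenvector_of_isIrreducible [Nonempty ι] {B : Matrix ι ι ℝ}
    (hB : B.IsIrreducible) :
    ∃ (l : ℝ) (x : ι → ℝ), 0 < l ∧ (∀ i, 0 < x i) ∧ B *ᵥ x = l • x := by
  obtain ⟨P, hP, hPB⟩ := exists_pos_commute_of_isIrreducible hB
  obtain ⟨l, x, hx, hl⟩ := exists_pos_eigenvector_of_commute hP hPB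
  refine ⟨l, x, ?_, hx, hl⟩
  obtain ⟨i⟩ := ‹Nonempty ι›
  obtain ⟨j, hj⟩ := exists_apply_pos_of_isIrreducible hB i
  refine pos_of_mul_pos_left (b := x i) ?_ (hx i).le
  calc 0 < (B *ᵥ x) i :=
        Finset.sum_pos' (fun k _ => mul_nonneg (hB.nonneg i k) (hx k).le)
          ⟨j, Finset.mem_univ j, mul_pos hj (hx j)⟩
    _ = l * x i := congrFun hl i

end PerronFrobenius

theorem isIrreducible_of_transGen {ι R : Type*} [Ring R] [LinearOrder R] {B : Matrix ι ι R}
    (hB : ∀ i j, 0 ≤ B i j) (h : ∀ i j, Relation.TransGen (fun a b => 0 < B a b) i j) :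
    B.IsIrreducible := by
  let _ := B.toQuiver
  refine ⟨hB, fun i j => ?_⟩
  induction h i j with
  | single hij => exact ⟨Quiver.Hom.toPath ⟨hij⟩, Nat.one_pos⟩
  | tail _ hbc ih =>
    obtain ⟨p, -⟩ := ih
    exact ⟨p.cons ⟨hbc⟩, Nat.succ_pos _⟩

theorem tsum_pow_mul_ne_top_of_mul_limsup_lt_one {a : ℕ → ℝ≥0∞} (ha : ∀ n, a n ≠ ⊤) {t : ℝ≥0∞}
    (ht : t ≠ ⊤) (h : t * limsup (fun n : ℕ => a n ^ ((n : ℝ)⁻¹)) atTop < 1) :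
    ∑' n, t ^ n * a n ≠ ⊤ := by
  rw [← ENNReal.limsup_const_mul_of_ne_top ht] at h
  obtain ⟨r, hr, hr1⟩ := exists_between h
  have hev : ∀ᶠ n : ℕ in atTop, t ^ n * a n ≤ r ^ n := by
    filter_upwards [eventually_lt_of_limsup_lt hr, eventually_ne_atTop 0] with n hn hn0
    calc t ^ n * a n = (t * a n ^ ((n : ℝ)⁻¹)) ^ n := by
          rw [mul_pow, ENNReal.rpow_inv_natCast_pow hn0]
      _ ≤ r ^ n := by gcongr
  obtain ⟨N, hN⟩ := eventually_atTop.mp hev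
  rw [← Summable.sum_add_tsum_nat_add' (k := N) ENNReal.summable]
  refine ENNReal.add_ne_top.mpr ⟨ENNReal.sum_ne_top.mpr fun n _ =>
    ENNReal.mul_ne_top (ENNReal.pow_ne_top ht) (ha n), ne_top_of_le_ne_top ?_ <|
    ENNReal.tsum_le_tsum fun n => (hN (n + N) (Nat.le_add_left N n)).trans <|
      pow_le_pow_right_of_le_one' hr1.le (Nat.le_add_right n N)⟩
  rw [ENNReal.tsum_geometric]
  exact ENNReal.inv_ne_top.mpr (tsub_pos_of_lt hr1).ne'

section Graph

variable {A : V → V → ℝ≥0∞} {H : Set V}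

/-- `Reaches A u w` says that the graph of `A` has a path, possibly of length `0`, from `u` to
`w`. -/
def Reaches (A : V → V → ℝ≥0∞) : V → V → Prop :=
  Relation.ReflTransGen fun a b => A a b ≠ 0

theorem Hereditary.mem_of_reaches (hH : Hereditary A H) {u w : V} (hu : u ∈ H)
    (h : Reaches A u w) : w ∈ H := by
  induction h with
  | refl => exact hu
  | tail _ hbc ih => exact hH ih hbc

theorem hereditary_setOf_reaches (A : V → V → ℝ≥0∞) (u : V) : Hereditary A {w | Reaches A u w} :=
  fun _ _ => Relation.ReflTransGen.tail

theorem Hereditary.transGen_subtype (hH : Hereditary A H) {u w : H}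
    (h : Relation.TransGen (fun a b => A a b ≠ 0) (u : V) w) :
    Relation.TransGen (fun a b : H => A a b ≠ 0) u w := by
  suffices ∀ v (hv : v ∈ H), Relation.TransGen (fun a b => A a b ≠ 0) v w →
      Relation.TransGen (fun a b : H => A a b ≠ 0) ⟨v, hv⟩ w from this u u.2 h
  intro v hv hvw
  induction hvw using Relation.TransGen.head_induction_on with
  | single hvw => exact .single hvw
  | head hab _ ih => exact .head hab (ih (hH hv hab))

namespace Cofinal

@[elab_as_elim]
theorem induction (hA : Cofinal A) (hH : Hereditary A H) (hne : H.Nonempty) {p : V → Prop}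
    (mem : ∀ v ∈ H, p v) (step : ∀ v ∉ VInf A, (∀ w, A v w ≠ 0 → p w) → p v) (v : V) : p v := by
  -- The vertices satisfying `p` need not form a hereditary set, unlike those from which only such
  -- vertices can be reached.
  have hS := hA {v | ∀ w, Reaches A v w → p w}
    (fun _ _ hv hvw w hw => hv w (.head hvw hw))
    (fun v hv hout w hvw => by
      rcases hvw.cases_head with rfl | ⟨u, hvu, huw⟩
      · exact step v hv fun u hvu => hout u hvu u .refl
      · exact hout u hvu w huw)
  obtain ⟨u, hu⟩ := hne
  have hne' : {v | ∀ w, Reaches A v w → p w}.Nonempty :=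
    ⟨u, fun w huw => mem w (hH.mem_of_reaches hu huw)⟩
  exact Set.eq_univ_iff_forall.mp (hS.resolve_left hne'.ne_empty) v v .refl

theorem reaches_of_mem_NW (hA : Cofinal A) (u : V) {v : V} (hv : v ∈ NW A) : Reaches A u v := by
  have hH := hereditary_setOf_reaches A u
  induction v using hA.induction hH ⟨u, .refl⟩ with
  | mem v huv => exact huv
  | step v _ ih =>
    obtain ⟨w, hvw, hwv⟩ := Relation.TransGen.head'_iff.mp hv
    exact hH.mem_of_reaches (ih w hvw (.tail' hwv hvw)) hwv

theorem hereditary_NW (hA : Cofinal A) : Hereditary A (NW A) :=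
  fun _ w hv hvw => .tail' (hA.reaches_of_mem_NW w hv) hvw

theorem finite_setOf_ne_zero (hA : Cofinal A) (hne : (NW A).Nonempty) (hfin : (NW A).Finite)
    (v : V) : {w | A v w ≠ 0}.Finite := by
  induction v using hA.induction hA.hereditary_NW hne with
  | mem v hv => exact hfin.subset fun w => hA.hereditary_NW hv
  | step v hv _ => exact Set.not_infinite.mp fun h => hv (.inr h)

end Cofinal

end Graph

section RealSubmatrix

variable {A : V → V → ℝ≥0∞} {H : Set V}

/-- The restriction of `A` to `H`, as a real matrix. An infinite entry becomes `0`, so this is used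
only for matrices with finite entries. -/
def realSubmatrix (A : V → V → ℝ≥0∞) (H : Set V) : Matrix H H ℝ :=
  Matrix.of fun i j => (A i j).toReal

theorem Cofinal.isIrreducible_realSubmatrix_NW (hA : Cofinal A) (hAtop : ∀ v w, A v w ≠ ⊤) :
    (realSubmatrix A (NW A)).IsIrreducible := by
  refine isIrreducible_of_transGen (fun _ _ => ENNReal.toReal_nonneg) fun i j => ?_
  obtain ⟨w, hiw, -⟩ := Relation.TransGen.head'_iff.mp i.2
  have hij : Relation.TransGen (fun a b => A a b ≠ 0) (i : V) j :=
    .head' hiw (hA.reaches_of_mem_NW w j.2)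
  exact Relation.TransGen.mono (fun (a b : NW A) hab => ENNReal.toReal_pos hab (hAtop a b)) i j
    (hA.hereditary_NW.transGen_subtype hij)

theorem Hereditary.tsum_mul_extend (hH : Hereditary A H) [Fintype H] (hAtop : ∀ v w, A v w ≠ ⊤)
    {y : H → ℝ} (hy : ∀ i, 0 ≤ y i) (v : H) :
    ∑' w, A v w * Function.extend Subtype.val (fun i => ENNReal.ofReal (y i)) 0 w =
      ENNReal.ofReal ((realSubmatrix A H).mulVec y v) := by
  set x := Function.extend Subtype.val (fun i => ENNReal.ofReal (y i)) 0
  have hsupp : Function.support (fun w => A v w * x w) ⊆ H := fun w hw =>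
    hH v.2 (left_ne_zero_of_mul hw)
  have hterm : ∀ j : H, A v j * x j = ENNReal.ofReal (realSubmatrix A H v j * y j) := fun j => by
    rw [show x j = _ from Subtype.val_injective.extend_apply _ _ j, realSubmatrix, Matrix.of_apply,
      ENNReal.ofReal_mul ENNReal.toReal_nonneg, ENNReal.ofReal_toReal (hAtop _ _)]
  rw [← tsum_subtype_eq_of_support_subset hsupp, tsum_fintype]
  simp only [hterm]
  exact (ENNReal.ofReal_sum_of_nonneg fun j _ => mul_nonneg ENNReal.toReal_nonneg (hy j)).symm

end RealSubmatrix

section Powers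

variable [DecidableEq V] {A : V → V → ℝ≥0∞}

theorem tsum_Apow_zero_mul (A : V → V → ℝ≥0∞) (f : V → ℝ≥0∞) (v : V) :
    ∑' u, Apow A 0 v u * f u = f v := by
  rw [tsum_eq_single v fun u hu => by simp [Apow, hu.symm]]
  simp [Apow]

theorem tsum_Apow_succ_mul (A : V → V → ℝ≥0∞) (n : ℕ) (f : V → ℝ≥0∞) (v : V) :
    ∑' w, Apow A (n + 1) v w * f w = ∑' u, A v u * ∑' w, Apow A n u w * f w := by
  simp only [Apow, ← ENNReal.tsum_mul_left, ← ENNReal.tsum_mul_right, mul_assoc]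
  exact ENNReal.tsum_comm

theorem Apow_add (A : V → V → ℝ≥0∞) (n k : ℕ) (v w : V) :
    Apow A (n + k) v w = ∑' u, Apow A n v u * Apow A k u w := by
  induction n generalizing v with
  | zero => rw [tsum_Apow_zero_mul, Nat.zero_add]
  | succ n ih =>
    rw [tsum_Apow_succ_mul, Nat.succ_add]
    simp only [← ih]
    rfl

theorem Reaches.exists_Apow_ne_zero {u w : V} (h : Reaches A u w) : ∃ k, Apow A k u w ≠ 0 := by
  induction h using Relation.ReflTransGen.head_induction_on with
  | refl => exact ⟨0, by simp [Apow]⟩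
  | @head a b hab _ ih =>
    obtain ⟨k, hk⟩ := ih
    exact ⟨k + 1, fun h => mul_ne_zero hab hk (ENNReal.tsum_eq_zero.mp h b)⟩

theorem Hereditary.Apow_eq_zero {H : Set V} (hH : Hereditary A H) (n : ℕ) {v w : V}
    (hv : v ∈ H) (hw : w ∉ H) : Apow A n v w = 0 := by
  induction n generalizing v with
  | zero => exact if_neg (ne_of_mem_of_not_mem hv hw)
  | succ n ih =>
    refine ENNReal.tsum_eq_zero.mpr fun u => ?_
    by_cases hu : A v u = 0
    · rw [hu, zero_mul]
    · rw [ih (hH hv hu), mul_zero]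

/-- The Green kernel `∑_n t^n A^n_{vw}` of `A`, a value in `[0, ∞]`; for `t = e^{-β}`, divergence on
the diagonal is recurrence of `A` at `β`. -/
noncomputable def greenKernel (A : V → V → ℝ≥0∞) (t : ℝ≥0∞) (v w : V) : ℝ≥0∞ :=
  ∑' n, t ^ n * Apow A n v w

theorem greenKernel_mul_le (A : V → V → ℝ≥0∞) (t : ℝ≥0∞) (k : ℕ) (u v w : V) :
    greenKernel A t u v * (t ^ k * Apow A k v w) ≤ greenKernel A t u w :=
  calc greenKernel A t u v * (t ^ k * Apow A k v w)
      = ∑' n, t ^ (n + k) * (Apow A n u v * Apow A k v w) := by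
        rw [greenKernel, ← ENNReal.tsum_mul_right]
        exact tsum_congr fun n => by ring
    _ ≤ ∑' n, t ^ (n + k) * Apow A (n + k) u w := by
        gcongr with n
        rw [Apow_add]
        exact ENNReal.le_tsum v
    _ ≤ greenKernel A t u w :=
        ENNReal.tsum_comp_le_tsum_of_injective (add_left_injective k) fun n => t ^ n * Apow A n u w

theorem Reaches.greenKernel_ne_top {t : ℝ≥0∞} (ht : t ≠ 0) {u v w : V} (hvw : Reaches A v w)
    (h : greenKernel A t u w ≠ ⊤) : greenKernel A t u v ≠ ⊤ := by
  obtain ⟨k, hk⟩ := hvw.exists_Apow_ne_zero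
  exact fun htop => h <| top_unique <| by
    simpa [htop, ENNReal.top_mul (mul_ne_zero (pow_ne_zero k ht) hk)] using
      greenKernel_mul_le A t k u v w

theorem Hereditary.greenKernel_eq_zero {H : Set V} (hH : Hereditary A H) (t : ℝ≥0∞) {v w : V}
    (hv : v ∈ H) (hw : w ∉ H) : greenKernel A t v w = 0 :=
  ENNReal.tsum_eq_zero.mpr fun n => by rw [hH.Apow_eq_zero n hv hw, mul_zero]

end Powers

section Harmonic

theorem expb_ne_zero (β : ℝ) : expb β ≠ 0 := by
  simpa [expb] using Real.exp_pos β

theorem expb_ne_top (β : ℝ) : expb β ≠ ⊤ := ENNReal.ofReal_ne_top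

theorem expb_injective : Function.Injective expb := fun a b h =>
  Real.exp_injective ((ENNReal.ofReal_eq_ofReal_iff (Real.exp_pos a).le (Real.exp_pos b).le).mp h)

variable {A : V → V → ℝ≥0∞} {H : Set V} {β : ℝ} {ξ η : V → ℝ≥0∞} {c : ℝ≥0∞}

namespace IsHarmonic

theorem eq_mul_of_forall_mem (hξ : IsHarmonic A β ξ) (hη : IsHarmonic A β η) (hA : Cofinal A)
    (hH : Hereditary A H) (hne : H.Nonempty) (h : ∀ v ∈ H, η v = c * ξ v) (v : V) :
    η v = c * ξ v := by
  induction v using hA.induction hH hne with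
  | mem v hv => exact h v hv
  | step v _ ih =>
    refine (ENNReal.mul_right_inj (expb_ne_zero β) (expb_ne_top β)).mp ?_
    rw [← hη.2, mul_left_comm, ← hξ.2, ← ENNReal.tsum_mul_left]
    refine tsum_congr fun w => ?_
    by_cases hw : A v w = 0
    · simp only [hw, zero_mul, mul_zero]
    · rw [ih w hw, mul_left_comm]

theorem hereditary_setOf_eq_zero (h : IsHarmonic A β ξ) : Hereditary A {v | ξ v = 0} := by
  intro v w hv hvw
  have hsum : ∑' u, A v u * ξ u = 0 := by rw [h.2, show ξ v = 0 from hv, mul_zero]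
  exact (mul_eq_zero.mp (ENNReal.tsum_eq_zero.mp hsum w)).resolve_left hvw

theorem apply_ne_zero (h : IsHarmonic A β ξ) (hA : Cofinal A) (hξ : ξ ≠ 0) (v : V) : ξ v ≠ 0 := by
  intro hv
  refine hξ (funext fun u => ?_)
  simpa using h.eq_mul_of_forall_mem h hA h.hereditary_setOf_eq_zero ⟨v, hv⟩ (c := 0)
    (fun w hw => by rw [zero_mul]; exact hw) u

/-- A minimum principle: `η / ξ` can attain its minimum `c` over `H` at `v` only if it equals `c` at
all out-neighbours of `v`, since `(η / ξ) v` is a weighted average of the values there. -/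
theorem hereditary_setOf_eq_mul (hξ : IsHarmonic A β ξ) (hη : IsHarmonic A β η)
    (hAtop : ∀ v w, A v w ≠ ⊤) (hH : Hereditary A H) (hle : ∀ v ∈ H, c * ξ v ≤ η v) :
    Hereditary A {v ∈ H | η v = c * ξ v} := by
  rintro v w ⟨hvH, hv⟩ hvw
  have hsum : ∑' u, A v u * (c * ξ u) = ∑' u, A v u * η u := by
    simp only [mul_left_comm (A v _), ENNReal.tsum_mul_left, hξ.2, hη.2, hv]
    exact mul_left_comm _ _ _
  have hfin : ∑' u, A v u * (c * ξ u) ≠ ⊤ := by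
    rw [hsum, hη.2]
    exact ENNReal.mul_ne_top (expb_ne_top β) (hη.1 v)
  have hterm : ∀ u, A v u * (c * ξ u) ≤ A v u * η u := fun u => by
    by_cases hu : A v u = 0
    · simp only [hu, zero_mul, le_refl]
    · gcongr
      exact hle u (hH hvH hu)
  refine ⟨hH hvH hvw, of_not_not fun hne => ?_⟩
  have hlt : A v w * (c * ξ w) < A v w * η w :=
    (ENNReal.mul_lt_mul_iff_right hvw (hAtop v w)).mpr
      (lt_of_le_of_ne (hle w (hH hvH hvw)) (Ne.symm hne))
  exact (ENNReal.tsum_lt_tsum hfin hterm hlt).ne hsum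

theorem exists_eq_mul (hξ : IsHarmonic A β ξ) (hξ0 : ξ ≠ 0) (hη : IsHarmonic A β η)
    (hA : Cofinal A) (hAtop : ∀ v w, A v w ≠ ⊤) (hne : (NW A).Nonempty) (hfin : (NW A).Finite) :
    ∃ c : ℝ≥0∞, c ≠ ⊤ ∧ ∀ v, η v = c * ξ v := by
  have hpos := hξ.apply_ne_zero hA hξ0
  obtain ⟨v₀, hv₀, hmin⟩ := Set.exists_min_image (NW A) (fun v => η v / ξ v) hfin hne
  set c := η v₀ / ξ v₀
  have hle : ∀ v ∈ NW A, c * ξ v ≤ η v := fun v hv =>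
    (ENNReal.le_div_iff_mul_le (.inl (hpos v)) (.inl (hξ.1 v))).mp (hmin v hv)
  have hv₀c : η v₀ = c * ξ v₀ := (ENNReal.div_mul_cancel (hpos v₀) (hξ.1 v₀)).symm
  exact ⟨c, ENNReal.div_ne_top (hη.1 v₀) (hpos v₀), hξ.eq_mul_of_forall_mem hη hA
    (hξ.hereditary_setOf_eq_mul hη hAtop hA.hereditary_NW hle) ⟨v₀, hv₀, hv₀c⟩ fun _ hv => hv.2⟩

section Growth

variable [DecidableEq V]

theorem tsum_Apow_mul (h : IsHarmonic A β ξ) (n : ℕ) (v : V) :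
    ∑' w, Apow A n v w * ξ w = expb β ^ n * ξ v := by
  induction n generalizing v with
  | zero => rw [tsum_Apow_zero_mul, pow_zero, one_mul]
  | succ n ih =>
    simp only [tsum_Apow_succ_mul, ih, mul_left_comm (A v _), ENNReal.tsum_mul_left, h.2 v]
    rw [pow_succ, mul_assoc]

theorem Apow_self_le (h : IsHarmonic A β ξ) {v : V} (hv : ξ v ≠ 0) (n : ℕ) :
    Apow A n v v ≤ expb β ^ n := by
  refine (ENNReal.mul_le_mul_iff_left hv (h.1 v)).mp ?_
  rw [← h.tsum_Apow_mul]
  exact ENNReal.le_tsum v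

theorem tsum_greenKernel_mul (h : IsHarmonic A β ξ) {v : V} (hv : ξ v ≠ 0) :
    ∑' w, greenKernel A (expb β)⁻¹ v w * ξ w = ⊤ :=
  calc ∑' w, greenKernel A (expb β)⁻¹ v w * ξ w
      = ∑' n, (expb β)⁻¹ ^ n * ∑' w, Apow A n v w * ξ w := by
        simp only [greenKernel, ← ENNReal.tsum_mul_right, ← ENNReal.tsum_mul_left, mul_assoc]
        exact ENNReal.tsum_comm
    _ = ∑' _ : ℕ, ξ v := tsum_congr fun n => by
        rw [h.tsum_Apow_mul, ← mul_assoc, ← mul_pow,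
          ENNReal.inv_mul_cancel (expb_ne_zero β) (expb_ne_top β), one_pow, one_mul]
    _ = ⊤ := ENNReal.tsum_const_eq_top_of_ne_zero hv

theorem greenKernel_self_eq_top (h : IsHarmonic A β ξ) (hξ : ξ ≠ 0) (hA : Cofinal A)
    (hfin : (NW A).Finite) {v : V} (hv : v ∈ NW A) : greenKernel A (expb β)⁻¹ v v = ⊤ := by
  by_contra hG
  refine absurd (h.tsum_greenKernel_mul (h.apply_ne_zero hA hξ v)) ?_
  rw [tsum_eq_sum (s := hfin.toFinset) fun w hw => by
    rw [hA.hereditary_NW.greenKernel_eq_zero _ hv (hfin.mem_toFinset.not.mp hw), zero_mul]]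
  exact ENNReal.sum_ne_top.mpr fun w _ => ENNReal.mul_ne_top
    ((hA.reaches_of_mem_NW w hv).greenKernel_ne_top
      (ENNReal.inv_ne_zero.mpr (expb_ne_top β)) hG) (h.1 w)

theorem limsup_Apow_self (h : IsHarmonic A β ξ) (hξ : ξ ≠ 0) (hA : Cofinal A)
    (hfin : (NW A).Finite) {v : V} (hv : v ∈ NW A) :
    limsup (fun n : ℕ => Apow A n v v ^ ((n : ℝ)⁻¹)) atTop = expb β := by
  have hbound := h.Apow_self_le (h.apply_ne_zero hA hξ v)
  refine le_antisymm (limsup_le_of_le (h := ?_)) (le_of_not_gt fun hlt => ?_)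
  · filter_upwards [eventually_ne_atTop 0] with n hn
    calc Apow A n v v ^ ((n : ℝ)⁻¹) ≤ (expb β ^ n) ^ ((n : ℝ)⁻¹) :=
          ENNReal.rpow_le_rpow (hbound n) (by positivity)
      _ = expb β := ENNReal.pow_rpow_inv_natCast hn _
  · refine tsum_pow_mul_ne_top_of_mul_limsup_lt_one
      (fun n => ne_top_of_le_ne_top (ENNReal.pow_ne_top (expb_ne_top β)) (hbound n))
      (ENNReal.inv_ne_top.mpr (expb_ne_zero β)) ?_ (h.greenKernel_self_eq_top hξ hA hfin hv)
    rwa [mul_comm, ← div_eq_mul_inv,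
      ENNReal.div_lt_iff (.inl (expb_ne_zero β)) (.inl (expb_ne_top β)), one_mul]

end Growth

end IsHarmonic

theorem exists_eq_on_and_eq_mul_tsum_off (A : V → V → ℝ≥0∞) (H : Set V) (x : V → ℝ≥0∞)
    (c : ℝ≥0∞) :
    ∃ ξ : V → ℝ≥0∞, (∀ v ∈ H, ξ v = x v) ∧ ∀ v ∉ H, ξ v = c * ∑' w, A v w * ξ w := by
  classical
  let F : (V → ℝ≥0∞) →o (V → ℝ≥0∞) :=
    { toFun := fun ξ v => if v ∈ H then x v else c * ∑' w, A v w * ξ w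
      monotone' := fun ξ η hle v => by
        by_cases hv : v ∈ H
        · simp only [if_pos hv, le_refl]
        · simp only [if_neg hv]
          gcongr with w
          exact hle w }
  have hfix : ∀ v, F.lfp v = if v ∈ H then x v else c * ∑' w, A v w * F.lfp w :=
    fun v => (congrFun F.map_lfp v).symm
  exact ⟨F.lfp, fun v hv => (hfix v).trans (if_pos hv), fun v hv => (hfix v).trans (if_neg hv)⟩

theorem Cofinal.exists_isHarmonic_extension (hA : Cofinal A) (hAtop : ∀ v w, A v w ≠ ⊤)
    (hrow : ∀ v, {w | A v w ≠ 0}.Finite) (hH : Hereditary A H) (hne : H.Nonempty)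
    {x : V → ℝ≥0∞} (hxtop : ∀ v ∈ H, x v ≠ ⊤)
    (hx : ∀ v ∈ H, ∑' w, A v w * x w = expb β * x v) :
    ∃ ξ, IsHarmonic A β ξ ∧ ∀ v ∈ H, ξ v = x v := by
  obtain ⟨ξ, hon, hoff⟩ := exists_eq_on_and_eq_mul_tsum_off A H x (expb β)⁻¹
  refine ⟨ξ, ⟨fun v => ?_, fun v => ?_⟩, hon⟩
  · induction v using hA.induction hH hne with
    | mem v hv => exact hon v hv ▸ hxtop v hv
    | step v _ ih =>
      by_cases hv : v ∈ H
      · exact hon v hv ▸ hxtop v hv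
      rw [hoff v hv, tsum_eq_sum (s := (hrow v).toFinset) fun w hw => by
        rw [show A v w = 0 by simpa using hw, zero_mul]]
      exact ENNReal.mul_ne_top (ENNReal.inv_ne_top.mpr (expb_ne_zero β))
        (ENNReal.sum_ne_top.mpr fun w hw =>
          ENNReal.mul_ne_top (hAtop v w) (ih w ((hrow v).mem_toFinset.mp hw)))
  · by_cases hv : v ∈ H
    · rw [hon v hv, ← hx v hv]
      refine tsum_congr fun w => ?_
      by_cases hw : A v w = 0
      · simp only [hw, zero_mul]
      · rw [hon w (hH hv hw)]
    · rw [hoff v hv, ← mul_assoc, ENNReal.mul_inv_cancel (expb_ne_zero β) (expb_ne_top β), one_mul]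

theorem Cofinal.exists_pos_eigenvector_NW (hA : Cofinal A) (hAtop : ∀ v w, A v w ≠ ⊤)
    (hne : (NW A).Nonempty) (hfin : (NW A).Finite) :
    ∃ (β : ℝ) (x : V → ℝ≥0∞), (∀ v ∈ NW A, x v ≠ 0 ∧ x v ≠ ⊤) ∧
      ∀ v ∈ NW A, ∑' w, A v w * x w = expb β * x v := by
  have : Fintype (NW A) := hfin.fintype
  have : Nonempty (NW A) := hne.to_subtype
  obtain ⟨l, y, hl, hy, hly⟩ :=
    exists_pos_eigenvector_of_isIrreducible (hA.isIrreducible_realSubmatrix_NW hAtop)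
  let x : V → ℝ≥0∞ := Function.extend Subtype.val (fun i => ENNReal.ofReal (y i)) 0
  have hxy : ∀ i : NW A, x i = ENNReal.ofReal (y i) := Subtype.val_injective.extend_apply _ _
  refine ⟨Real.log l, x, fun v hv => ?_, fun v hv => ?_⟩
  · rw [hxy ⟨v, hv⟩]
    exact ⟨(ENNReal.ofReal_pos.mpr (hy _)).ne', ENNReal.ofReal_ne_top⟩
  · calc ∑' w, A v w * x w
        = ENNReal.ofReal ((realSubmatrix A (NW A)).mulVec y ⟨v, hv⟩) :=
          hA.hereditary_NW.tsum_mul_extend hAtop (fun i => (hy i).le) ⟨v, hv⟩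
      _ = expb (Real.log l) * x v := by
          rw [hly, Pi.smul_apply, smul_eq_mul, ENNReal.ofReal_mul hl.le, expb, Real.exp_log hl,
            hxy ⟨v, hv⟩]

theorem Cofinal.exists_isHarmonic (hA : Cofinal A) (hAtop : ∀ v w, A v w ≠ ⊤)
    (hne : (NW A).Nonempty) (hfin : (NW A).Finite) :
    ∃ (β : ℝ) (ξ : V → ℝ≥0∞), IsHarmonic A β ξ ∧ ξ ≠ 0 := by
  obtain ⟨β, x, hx, hsum⟩ := hA.exists_pos_eigenvector_NW hAtop hne hfin
  obtain ⟨ξ, hξ, hξx⟩ := hA.exists_isHarmonic_extension hAtop (hA.finite_setOf_ne_zero hne hfin)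
    hA.hereditary_NW hne (fun v hv => (hx v hv).2) hsum
  obtain ⟨v, hv⟩ := hne
  exact ⟨β, ξ, hξ, fun h0 => (hx v hv).1 (by rw [← hξx v hv, h0, Pi.zero_apply])⟩

end Harmonic

theorem stmt15_general [DecidableEq V] {A : V → V → ℝ≥0∞} (hA : Cofinal A)
    (hAtop : ∀ v w, A v w ≠ ⊤) (hne : (NW A).Nonempty) (hfin : (NW A).Finite) :
    ∃ β₀ : ℝ,
      (∀ v ∈ NW A, limsup (fun n : ℕ => Apow A n v v ^ ((n : ℝ)⁻¹)) atTop = expb β₀) ∧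
      (∀ (β : ℝ) (ξ : V → ℝ≥0∞), IsHarmonic A β ξ → ξ ≠ 0 → β = β₀) ∧
      ∃ ξ : V → ℝ≥0∞, (IsHarmonic A β₀ ξ ∧ ξ ≠ 0) ∧
        ∀ ξ' : V → ℝ≥0∞, IsHarmonic A β₀ ξ' → ξ' ≠ 0 →
          ∃ c : ℝ≥0∞, c ≠ ⊤ ∧ ∀ v, ξ' v = c * ξ v := by
  obtain ⟨β₀, ξ, h, hξ⟩ := hA.exists_isHarmonic hAtop hne hfin
  refine ⟨β₀, fun v => h.limsup_Apow_self hξ hA hfin, fun β η hη hη0 => ?_, ξ, ⟨h, hξ⟩,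
    fun ξ' h' _ => h.exists_eq_mul hξ h' hA hAtop hne hfin⟩
  obtain ⟨v, hv⟩ := hne
  exact expb_injective ((hη.limsup_Apow_self hη0 hA hfin hv).symm.trans
    (h.limsup_Apow_self hξ hA hfin hv))

/-- Under the standing assumptions, if `NW` is non-empty and finite then a
non-zero `β`-harmonic vector exists only when `β = β₀`, and there is a non-zero
`β₀`-harmonic vector, unique up to multiplication by non-negative scalars. -/
theorem stmt15 [Countable V] [DecidableEq V] (A : V → V → ℝ≥0∞)
    (hst : Standing A) (β₀ : ℝ)
    (hβ₀ : ∀ v ∈ NW A,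
      Filter.limsup (fun n : ℕ => Apow A n v v ^ ((n : ℝ)⁻¹)) Filter.atTop = expb β₀)
    (hne : (NW A).Nonempty) (hfin : (NW A).Finite) :
    (∀ (β : ℝ) (ξ : V → ℝ≥0∞), IsHarmonic A β ξ → ξ ≠ 0 → β = β₀) ∧
      ∃ ξ : V → ℝ≥0∞, (IsHarmonic A β₀ ξ ∧ ξ ≠ 0) ∧
        ∀ ξ' : V → ℝ≥0∞, IsHarmonic A β₀ ξ' → ξ' ≠ 0 →
          ∃ c : ℝ≥0∞, c ≠ ⊤ ∧ ∀ v, ξ' v = c * ξ v := by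
  obtain ⟨β₁, hlim, h⟩ := stmt15_general hst.1 hst.2.2.1 hne hfin
  exact expb_injective ((hlim _ hne.some_mem).symm.trans (hβ₀ _ hne.some_mem)) ▸ h
end

section
/- Assume the standing assumptions and let β ∈ ℝ. The convex cone E(A,β) of almost β-harmonic vectors, partially ordered by ξ ≥ μ ⇔ ξ − μ ∈ E(A,β), is a lattice cone: every pair ξ, η ∈ E(A,β) has a least upper bound ξ ∨ η ∈ E(A,β) and a greatest lower bound ξ ∧ η ∈ E(A,β) for this order. -/
open scoped ENNReal
open Filter

variable {V : Type*}

/-- The order on the cone `E(A,β)` of almost `β`-harmonic vectors: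
`μ ≤ ξ` iff `ξ - μ ∈ E(A,β)`, i.e. `ξ = μ + δ` for some `δ ∈ E(A,β)`. -/
def Below (A : V → V → ℝ≥0∞) (β : ℝ) (μ ξ : V → ℝ≥0∞) : Prop :=
  ∃ δ : V → ℝ≥0∞, IsAlmostHarmonic A β δ ∧ ∀ v, ξ v = μ v + δ v

/-!
Write `P = e^{-β} A`. A finite vector `ξ` is almost `β`-harmonic iff `ξ = P ξ + k` for a charge `k`
supported on `V_∞`, and for two such vectors `μ` is below `ξ` in the order of the cone iff both
`μ ≤ ξ` and the charge of `μ` is at most that of `ξ`, pointwise. So the supremum of `ξ` and `η`,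
with charges `k` and `l`, must be the pointwise least `σ ≥ ξ ⊔ η` with `P σ + k ⊔ l ≤ σ`. Since
`ξ ⊔ η ≤ P (ξ ⊔ η) + k ⊔ l`, the obstacle `ξ ⊔ η` is inactive: `σ` solves `σ = P σ + k ⊔ l`
exactly, hence lies in the cone. The infimum is `ξ + η - σ`.
-/

section SpecificOrder

variable {M : Type*} [AddCommMonoid M] {E : AddSubmonoid M} {x y s : M}

/-- The specific order of potential theory attached to a cone `E`: the difference lies in `E`. -/
def SpecificLE (E : AddSubmonoid M) (x y : M) : Prop :=
  ∃ d ∈ E, y = x + d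

/-- `s` is the least upper bound of `x` and `y` within `E`, for the specific order of `E`. -/
structure IsSpecificSup (E : AddSubmonoid M) (x y s : M) : Prop where
  mem : s ∈ E
  left_le : SpecificLE E x s
  right_le : SpecificLE E y s
  le_of_le : ∀ t ∈ E, SpecificLE E x t → SpecificLE E y t → SpecificLE E s t

/-- `i` is the greatest lower bound of `x` and `y` within `E`, for the specific order of `E`. -/
structure IsSpecificInf (E : AddSubmonoid M) (x y i : M) : Prop where
  mem : i ∈ E
  le_left : SpecificLE E i x
  le_right : SpecificLE E i y
  le_of_le : ∀ t ∈ E, SpecificLE E t x → SpecificLE E t y → SpecificLE E t i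

theorem IsSpecificSup.exists_isSpecificInf (h : IsSpecificSup E x y s)
    (hreg : ∀ z ∈ E, IsAddRegular z) (hx : x ∈ E) (hy : y ∈ E) :
    ∃ i, IsSpecificInf E x y i := by
  obtain ⟨a, ha, hsa⟩ := h.left_le
  obtain ⟨b, hb, hsb⟩ := h.right_le
  obtain ⟨i, hi, hxy⟩ : SpecificLE E s (x + y) :=
    h.le_of_le _ (add_mem hx hy) ⟨y, hy, rfl⟩ ⟨x, hx, add_comm x y⟩
  refine ⟨i, hi, ⟨b, hb, (hreg y hy).left ?_⟩, ⟨a, ha, (hreg x hx).left ?_⟩, ?_⟩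
  · change y + x = y + (i + b)
    rw [add_comm y x, hxy, hsb, add_assoc, add_comm b i]
  · change x + y = x + (i + a)
    rw [hxy, hsa, add_assoc, add_comm a i]
  · rintro t - ⟨p, hp, rfl⟩ ⟨q, hq, rfl⟩
    obtain ⟨d, hd, hsd⟩ : SpecificLE E s (t + p + q) :=
      h.le_of_le _ (add_mem hx hq) ⟨q, hq, rfl⟩ ⟨p, hp, add_right_comm t p q⟩
    refine ⟨d, hd, (hreg s h.mem).left ?_⟩
    calc s + i = t + p + (t + q) := hxy.symm
      _ = t + (t + p + q) := by abel
      _ = s + (t + d) := by rw [hsd, add_left_comm]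

end SpecificOrder

section Charge

variable {M : Type*} [AddCommMonoid M] {P : M →+ M} {x y d k l j : M}

/-- `x` solves the Poisson equation `x = P x + k`; the charge `k` stands for `(1 - P) x`, which
cannot be written without subtraction. -/
def HasCharge (P : M →+ M) (x k : M) : Prop :=
  P x + k = x

theorem HasCharge.add (hx : HasCharge P x k) (hy : HasCharge P y l) :
    HasCharge P (x + y) (k + l) := by
  rw [HasCharge, map_add, add_add_add_comm, hx, hy]

theorem HasCharge.unique (hxreg : IsAddRegular x) (hk : HasCharge P x k) (hl : HasCharge P x l) :
    k = l := by
  have hPxreg : IsAddRegular (P x) := IsAddRegular.of_add_left (hk.symm ▸ hxreg)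
  exact hPxreg.left (hk.trans hl.symm)

theorem HasCharge.of_add (hxreg : IsAddRegular x) (hx : HasCharge P x k)
    (hxd : HasCharge P (x + d) (k + j)) : HasCharge P d j := by
  refine hxreg.left ?_
  calc x + (P d + j) = P (x + d) + (k + j) := by
        rw [map_add, add_add_add_comm, hx]
    _ = x + d := hxd

/-- The excessive elements for `P` whose charge lies in `K`. Regularity encodes finiteness: it is
what makes differences of comparable elements well defined. -/
def excessiveCone (P : M →+ M) (K : AddSubmonoid M) : AddSubmonoid M where
  carrier := {x | IsAddRegular x ∧ ∃ k ∈ K, HasCharge P x k}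
  zero_mem' := ⟨isAddRegular_zero, 0, zero_mem K, by rw [HasCharge, map_zero, add_zero]⟩
  add_mem' := by
    rintro x y ⟨hxreg, k, hk, hxk⟩ ⟨hyreg, l, hl, hyl⟩
    exact ⟨hxreg.add hyreg, k + l, add_mem hk hl, hxk.add hyl⟩

theorem mem_excessiveCone {K : AddSubmonoid M} :
    x ∈ excessiveCone P K ↔ IsAddRegular x ∧ ∃ k ∈ K, HasCharge P x k :=
  Iff.rfl

end Charge

section ExcessiveCone

theorem monotone_addMonoidHom {M N : Type*} [AddCommMonoid M] [Preorder M]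
    [ExistsAddOfLE M] [AddCommMonoid N] [Preorder N] [CanonicallyOrderedAdd N]
    (P : M →+ N) : Monotone P := by
  intro x y hxy
  obtain ⟨d, rfl⟩ := exists_add_of_le hxy
  rw [map_add]
  exact le_self_add

theorem isAddRegular_of_le {M : Type*} [AddCommSemigroup M] [LE M] [ExistsAddOfLE M] {x y : M}
    (hy : IsAddRegular y) (hxy : x ≤ y) : IsAddRegular x := by
  obtain ⟨d, rfl⟩ := exists_add_of_le hxy
  exact hy.of_add_left

theorem specificLE_excessiveCone_iff {M : Type*} [AddCommMonoid M] [Preorder M]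
    [CanonicallyOrderedAdd M] {P : M →+ M} {K : AddSubmonoid M} (hK : IsLowerSet (K : Set M))
    {x y k l : M} (hx : HasCharge P x k) (hyreg : IsAddRegular y) (hl : l ∈ K)
    (hy : HasCharge P y l) :
    SpecificLE (excessiveCone P K) x y ↔ x ≤ y ∧ k ≤ l := by
  constructor
  · rintro ⟨d, ⟨-, j, -, hdj⟩, rfl⟩
    rw [hy.unique hyreg (hx.add hdj)]
    exact ⟨le_self_add, le_self_add⟩
  · rintro ⟨hxy, hkl⟩
    obtain ⟨d, rfl⟩ := exists_add_of_le hxy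
    obtain ⟨j, rfl⟩ := exists_add_of_le hkl
    exact ⟨d, ⟨hyreg.of_add_right, j, hK le_add_self hl, hx.of_add hyreg.of_add_left hy⟩, rfl⟩

theorem nextFixed_le_of_map_le {α : Type*} [CompleteLattice α] (F : α →o α) {x y : α}
    (hx : x ≤ F x) (hxy : x ≤ y) (hy : F y ≤ y) : (F.nextFixed x hx : α) ≤ y :=
  OrderHom.lfp_le _ (sup_le hxy hy)

variable {M : Type*} [AddCommMonoid M] [CompleteLattice M] [CanonicallyOrderedAdd M]
  {P : M →+ M} {K : AddSubmonoid M} {x y : M}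

theorem exists_least_hasCharge {f g : M} (hf : f ≤ P f + g) :
    ∃ s, HasCharge P s g ∧ f ≤ s ∧ ∀ y, f ≤ y → P y + g ≤ y → s ≤ y := by
  let F : M →o M := ⟨fun x ↦ P x + g, fun _ _ h ↦ add_le_add_left (monotone_addMonoidHom P h) g⟩
  exact ⟨F.nextFixed f hf, (F.nextFixed f hf).2, F.le_nextFixed hf,
    fun _ hfy hy ↦ nextFixed_le_of_map_le F hf hfy hy⟩

theorem exists_isSpecificSup_excessiveCone (hK : IsLowerSet (K : Set M))
    (hx : x ∈ excessiveCone P K) (hy : y ∈ excessiveCone P K) :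
    ∃ s, IsSpecificSup (excessiveCone P K) x y s := by
  obtain ⟨hxreg, k, hk, hxk⟩ := hx
  obtain ⟨hyreg, l, hl, hyl⟩ := hy
  have hP : Monotone P := monotone_addMonoidHom P
  have hsub : x ⊔ y ≤ P (x ⊔ y) + k ⊔ l :=
    sup_le (hxk.ge.trans (add_le_add (hP le_sup_left) le_sup_left))
      (hyl.ge.trans (add_le_add (hP le_sup_right) le_sup_right))
  obtain ⟨s, hs, hxys, hleast⟩ := exists_least_hasCharge hsub
  have hkl_le : k ⊔ l ≤ k + l := sup_le le_self_add le_add_self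
  have hs_le : s ≤ x + y := hleast _ (sup_le le_self_add le_add_self)
    ((add_le_add_right hkl_le _).trans (hxk.add hyl).le)
  have hsreg : IsAddRegular s := isAddRegular_of_le (hxreg.add hyreg) hs_le
  have hkl : k ⊔ l ∈ K := hK hkl_le (add_mem hk hl)
  refine ⟨s, ⟨hsreg, _, hkl, hs⟩,
    (specificLE_excessiveCone_iff hK hxk hsreg hkl hs).2 ⟨le_sup_left.trans hxys, le_sup_left⟩,
    (specificLE_excessiveCone_iff hK hyl hsreg hkl hs).2 ⟨le_sup_right.trans hxys, le_sup_right⟩,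
    ?_⟩
  rintro t ⟨htreg, m, hm, htm⟩ hxt hyt
  rw [specificLE_excessiveCone_iff hK hxk htreg hm htm] at hxt
  rw [specificLE_excessiveCone_iff hK hyl htreg hm htm] at hyt
  have hklm : k ⊔ l ≤ m := sup_le hxt.2 hyt.2
  exact (specificLE_excessiveCone_iff hK hs htreg hm htm).2
    ⟨hleast t (sup_le hxt.1 hyt.1) ((add_le_add_right hklm _).trans htm.le), hklm⟩

end ExcessiveCone

section SupportedOn

variable {α : Type*} [AddCommMonoid α] {S : Set V}

/-- The vectors supported on `S`. -/
def supportedOn (S : Set V) : AddSubmonoid (V → α) :=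
  AddSubmonoid.pi Sᶜ fun _ ↦ ⊥

theorem mem_supportedOn {k : V → α} : k ∈ supportedOn S ↔ ∀ v ∉ S, k v = 0 :=
  Iff.rfl

variable [PartialOrder α] [CanonicallyOrderedAdd α]

theorem isLowerSet_supportedOn (S : Set V) :
    IsLowerSet ((supportedOn S : AddSubmonoid (V → α)) : Set (V → α)) :=
  fun _ _ hle hk v hv ↦ le_zero_iff.1 ((hle v).trans_eq (hk v hv))

theorem exists_hasCharge_mem_supportedOn_iff [Sub α] [OrderedSub α] {P : (V → α) →+ (V → α)}
    {ξ : V → α} :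
    (∃ k ∈ supportedOn S, HasCharge P ξ k) ↔ P ξ ≤ ξ ∧ ∀ v ∉ S, P ξ v = ξ v := by
  constructor
  · rintro ⟨k, hk, hξk⟩
    refine ⟨le_self_add.trans_eq hξk, fun v hv ↦ ?_⟩
    simpa only [Pi.add_apply, mem_supportedOn.1 hk v hv, add_zero] using congrFun hξk v
  · rintro ⟨hle, heq⟩
    exact ⟨ξ - P ξ, mem_supportedOn.2 fun v hv ↦ tsub_eq_zero_of_le (heq v hv).ge,
      add_tsub_cancel_of_le hle⟩

end SupportedOn

theorem isAddRegular_iff_ne_top {α : Type*} [LinearOrderedAddCommMonoidWithTop α] [Nontrivial α]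
    {a : α} : IsAddRegular a ↔ a ≠ ⊤ := by
  refine ⟨?_, IsAddRegular.of_ne_top⟩
  rintro h rfl
  obtain ⟨b, hb⟩ := exists_ne (⊤ : α)
  exact hb (h.left ((top_add b).trans (top_add ⊤).symm))

section AlmostHarmonic

/-- The operator `e^{-β} A` on vectors. -/
noncomputable def scaledOp (A : V → V → ℝ≥0∞) (β : ℝ) : (V → ℝ≥0∞) →+ (V → ℝ≥0∞) where
  toFun ξ v := (expb β)⁻¹ * ∑' w, A v w * ξ w
  map_zero' := by ext v; simp
  map_add' ξ η := by ext v; simp only [Pi.add_apply, mul_add, ENNReal.tsum_add]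

/-- The cone `E(A,β)`, as the excessive vectors for `e^{-β} A` with charge supported on `V_∞`. -/
noncomputable def almostHarmonicCone (A : V → V → ℝ≥0∞) (β : ℝ) : AddSubmonoid (V → ℝ≥0∞) :=
  excessiveCone (scaledOp A β) (supportedOn (VInf A))

theorem expb_mul_scaledOp_apply (A : V → V → ℝ≥0∞) (β : ℝ) (ξ : V → ℝ≥0∞) (v : V) :
    expb β * scaledOp A β ξ v = ∑' w, A v w * ξ w :=
  ENNReal.mul_inv_cancel_left (expb_ne_zero β) (expb_ne_top β)

theorem scaledOp_apply_eq_iff {A : V → V → ℝ≥0∞} {β : ℝ} {ξ : V → ℝ≥0∞} {v : V} :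
    scaledOp A β ξ v = ξ v ↔ ∑' w, A v w * ξ w = expb β * ξ v := by
  rw [← expb_mul_scaledOp_apply, ENNReal.mul_right_inj (expb_ne_zero β) (expb_ne_top β)]

theorem scaledOp_apply_le_iff {A : V → V → ℝ≥0∞} {β : ℝ} {ξ : V → ℝ≥0∞} {v : V} :
    scaledOp A β ξ v ≤ ξ v ↔ ∑' w, A v w * ξ w ≤ expb β * ξ v := by
  rw [← expb_mul_scaledOp_apply, ENNReal.mul_le_mul_iff_right (expb_ne_zero β) (expb_ne_top β)]

theorem isAlmostHarmonic_iff {A : V → V → ℝ≥0∞} {β : ℝ} {ξ : V → ℝ≥0∞} :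
    IsAlmostHarmonic A β ξ ↔ (∀ v, ξ v ≠ ⊤) ∧
      scaledOp A β ξ ≤ ξ ∧ ∀ v ∉ VInf A, scaledOp A β ξ v = ξ v := by
  simp only [IsAlmostHarmonic, Pi.le_def, scaledOp_apply_eq_iff, scaledOp_apply_le_iff]
  refine and_congr_right fun _ ↦ ⟨fun ⟨heq, hle⟩ ↦ ⟨fun v ↦ ?_, heq⟩,
    fun ⟨hle, heq⟩ ↦ ⟨heq, fun v _ ↦ hle v⟩⟩
  exact (em (v ∈ VInf A)).elim (hle v) fun hv ↦ (heq v hv).le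

theorem mem_almostHarmonicCone {A : V → V → ℝ≥0∞} {β : ℝ} {ξ : V → ℝ≥0∞} :
    ξ ∈ almostHarmonicCone A β ↔ IsAlmostHarmonic A β ξ := by
  simp only [almostHarmonicCone, mem_excessiveCone, Pi.isAddRegular_iff, isAddRegular_iff_ne_top,
    exists_hasCharge_mem_supportedOn_iff, isAlmostHarmonic_iff]

theorem specificLE_almostHarmonicCone_iff {A : V → V → ℝ≥0∞} {β : ℝ} {μ ξ : V → ℝ≥0∞} :
    SpecificLE (almostHarmonicCone A β) μ ξ ↔ Below A β μ ξ := by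
  simp only [SpecificLE, Below, mem_almostHarmonicCone, funext_iff, Pi.add_apply]

end AlmostHarmonic

theorem stmt18_general (A : V → V → ℝ≥0∞) (β : ℝ) :
    ∀ ξ η : V → ℝ≥0∞, IsAlmostHarmonic A β ξ → IsAlmostHarmonic A β η →
      (∃ σ : V → ℝ≥0∞, IsAlmostHarmonic A β σ ∧ Below A β ξ σ ∧ Below A β η σ ∧
        ∀ τ : V → ℝ≥0∞, IsAlmostHarmonic A β τ → Below A β ξ τ → Below A β η τ →
          Below A β σ τ) ∧
      (∃ ι : V → ℝ≥0∞, IsAlmostHarmonic A β ι ∧ Below A β ι ξ ∧ Below A β ι η ∧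
        ∀ τ : V → ℝ≥0∞, IsAlmostHarmonic A β τ → Below A β τ ξ → Below A β τ η →
          Below A β τ ι) := by
  simp only [← mem_almostHarmonicCone, ← specificLE_almostHarmonicCone_iff]
  intro ξ η hξ hη
  obtain ⟨σ, hσ⟩ := exists_isSpecificSup_excessiveCone (isLowerSet_supportedOn _) hξ hη
  obtain ⟨ι, hι⟩ := hσ.exists_isSpecificInf (fun _ hζ ↦ (mem_excessiveCone.1 hζ).1) hξ hη
  exact ⟨⟨σ, hσ.mem, hσ.left_le, hσ.right_le, hσ.le_of_le⟩,
    ⟨ι, hι.mem, hι.le_left, hι.le_right, hι.le_of_le⟩⟩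

/-- Under the standing assumptions, the cone `E(A,β)` of almost
`β`-harmonic vectors, with the order `ξ ≥ μ ⇔ ξ - μ ∈ E(A,β)`, is a lattice cone: every
pair of elements has a least upper bound and a greatest lower bound in `E(A,β)`. -/
theorem stmt18 [Countable V] [DecidableEq V] (A : V → V → ℝ≥0∞)
    (hst : Standing A) (β : ℝ) :
    ∀ ξ η : V → ℝ≥0∞, IsAlmostHarmonic A β ξ → IsAlmostHarmonic A β η →
      (∃ σ : V → ℝ≥0∞, IsAlmostHarmonic A β σ ∧ Below A β ξ σ ∧ Below A β η σ ∧
        ∀ τ : V → ℝ≥0∞, IsAlmostHarmonic A β τ → Below A β ξ τ → Below A β η τ →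
          Below A β σ τ) ∧
      (∃ ι : V → ℝ≥0∞, IsAlmostHarmonic A β ι ∧ Below A β ι ξ ∧ Below A β ι η ∧
        ∀ τ : V → ℝ≥0∞, IsAlmostHarmonic A β τ → Below A β τ ξ → Below A β τ η →
          Below A β τ ι) :=
  stmt18_general A β
end
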